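/- Let G be a finite group of odd order, let (ρ, V) be an irreducible complex representation of G that is not isomorphic to the trivial one-dimensional representation, and let χ(g) = tr(ρ(g)) be its character. Then the Frobenius–Schur indicator of ρ vanishes: (1/|G|) · Σ_{g ∈ G} χ(g²) = 0. -/

import Mathlib

open scoped BigOperators

/-- The Frobenius–Schur indicator of a nontrivial irreducible complex
representation of a finite group of odd order vanishes. -/
theorem frobeniusSchur_indicator_eq_zero_of_odd_order
    {G : Type*} [Group G] [Fintype G] (hG : Odd (Fintype.card G))
    {V : Type*} [AddCommGroup V] [Module ℂ V] [FiniteDimensional ℂ V] [Nontrivial V]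
    (ρ : Representation ℂ G V)
    (hirr : ∀ p : Submodule ℂ V, (∀ (g : G), ∀ v ∈ p, ρ g v ∈ p) → p = ⊥ ∨ p = ⊤)
    (hnontriv : ¬ ∃ e : V ≃ₗ[ℂ] ℂ, ∀ (g : G) (v : V), e (ρ g v) = e v) :
    (1 / (Fintype.card G : ℂ)) * ∑ g : G, LinearMap.trace ℂ V (ρ (g ^ 2)) = 0 := by
  have hcop : (Nat.card G).Coprime 2 := by
    rw [Nat.card_eq_fintype_card]
    exact Nat.coprime_two_right.mpr hG
  have h1 : ∑ g : G, LinearMap.trace ℂ V (ρ (g ^ 2)) = ∑ g : G, LinearMap.trace ℂ V (ρ g) :=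
    Equiv.sum_comp (powCoprime hcop) (fun g => LinearMap.trace ℂ V (ρ g))
  -- the sum of all `ρ g` vanishes, since its values are invariant vectors
  have h2 : ∑ g : G, ρ g = 0 := by
    ext v
    by_contra hw
    set w := (∑ g : G, ρ g) v with hwdef
    have hw0 : w ≠ 0 := hw
    have hinv : ∀ h : G, ρ h w = w := by
      intro h
      have h3 : ρ h * ∑ g : G, ρ g = ∑ g : G, ρ g := by
        rw [Finset.mul_sum]
        simp_rw [← map_mul]
        exact Equiv.sum_comp (Equiv.mulLeft h) (fun g => ρ g)
      have h4 := congrArg (fun f => f v) h3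
      simpa only [Module.End.mul_apply] using h4
    have hspan : (ℂ ∙ w) = ⊤ := by
      rcases hirr (ℂ ∙ w) (by
        intro g x hx
        obtain ⟨c, rfl⟩ := Submodule.mem_span_singleton.mp hx
        rw [map_smul, hinv]
        exact hx) with h | h
      · exact absurd (Submodule.span_singleton_eq_bot.mp h) hw0
      · exact h
    have htriv : ∀ (g : G) (x : V), ρ g x = x := by
      intro g x
      have hx : x ∈ (ℂ ∙ w) := hspan ▸ Submodule.mem_top
      obtain ⟨c, rfl⟩ := Submodule.mem_span_singleton.mp hx
      rw [map_smul, hinv]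
    exact hnontriv ⟨((LinearEquiv.toSpanNonzeroSingleton ℂ V w hw0).trans
      (LinearEquiv.ofTop _ hspan)).symm, fun g x => by rw [htriv]⟩
  rw [h1, ← map_sum, h2, map_zero, mul_zero]
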